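/- Let e be an even integer with e ≥ 2 and let n be a positive integer. Then ν₂(∑_{k=0}^{n} binom(n, k)^e) = s₂(n). -/

import Mathlib

/-- `s2 n` is the number of ones in the binary expansion of `n`. -/
def s2 (n : ℕ) : ℕ := (Nat.digits 2 n).sum

open Finset in
lemma vand (b : ℕ) : ∀ (a N s : ℕ), a < N →
    ∑ t ∈ range N, a.choose t * b.choose (t + s) = (a + b).choose (a + s) := by
  intro a
  induction a with
  | zero =>
    intro N s h
    rw [Finset.sum_eq_single 0]
    · simp
    · intro t _ ht
      obtain ⟨u, rfl⟩ := Nat.exists_eq_succ_of_ne_zero ht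
      simp
    · intro h'
      simp at h'
      omega
  | succ a ih =>
    intro N s h
    obtain ⟨M, rfl⟩ : ∃ M, N = M + 1 := ⟨N - 1, by omega⟩
    have h1 := ih M (s + 1) (by omega)
    have h2 := ih (M + 1) s (by omega)
    rw [Finset.sum_range_succ'] at h2 ⊢
    have h3 : ∀ t, (a + 1).choose (t + 1) * b.choose (t + 1 + s)
        = a.choose t * b.choose (t + (s + 1)) + a.choose (t + 1) * b.choose (t + 1 + s) := by
      intro t
      rw [Nat.choose_succ_succ' a t, show t + (s + 1) = t + 1 + s by ring]
      ring
    simp only [h3, Finset.sum_add_distrib]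
    rw [h1, show a + 1 + b = (a + b) + 1 by ring, show a + 1 + s = (a + s) + 1 by ring,
      Nat.choose_succ_succ']
    simp only [Nat.choose_zero_right] at h2 ⊢
    rw [← add_assoc]
    omega

lemma choose_swap (a t i : ℕ) :
    a.choose t * (a - t).choose i = a.choose i * (a - i).choose t := by
  have h1 := Nat.choose_mul (n := a) (k := t + i) (s := t) (by omega)
  have h2 := Nat.choose_mul (n := a) (k := t + i) (s := i) (by omega)
  rw [show t + i - t = i by omega] at h1
  rw [show t + i - i = t by omega] at h2
  rw [← h1, ← h2, Nat.choose_symm_add]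

open Finset in
lemma mulP (n k i : ℕ) (hk : k ≤ n) (hi : i ≤ n) :
    n.choose k * (k.choose i * (n - k).choose i) =
      ∑ l ∈ range (n + 1), n.choose i * l.choose i * (k.choose l * (n - k).choose l) := by
  rcases lt_or_ge k i with h | h
  · rw [Nat.choose_eq_zero_of_lt h, Finset.sum_eq_zero]
    · simp
    · intro l _
      rcases lt_or_ge l i with h' | h'
      · simp [Nat.choose_eq_zero_of_lt h']
      · simp [Nat.choose_eq_zero_of_lt (lt_of_lt_of_le h h')]
  · rw [show n + 1 = i + (n + 1 - i) by omega, Finset.sum_range_add, Finset.sum_eq_zero, zero_add]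
    · have e : ∀ t, n.choose i * (i + t).choose i * (k.choose (i + t) * (n - k).choose (i + t))
          = n.choose i * k.choose i * ((k - i).choose t * (n - k).choose (t + i)) := by
        intro t
        have := Nat.choose_mul (n := k) (k := i + t) (s := i) (by omega)
        rw [show i + t - i = t by omega] at this
        rw [add_comm t i]
        linear_combination (n.choose i * (n - k).choose (i + t)) * this
      simp only [e]
      rw [← Finset.mul_sum, vand _ _ _ _ (by omega), show k - i + (n - k) = n - i by omega,
        show k - i + i = k by omega]
      have := choose_swap n k i
      linear_combination (k.choose i) * this
    · intro l hl
      simp [Nat.choose_eq_zero_of_lt (Finset.mem_range.1 hl)]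

open Finset in
lemma sumW (n i : ℕ) (hi : i ≤ n) :
    ∑ k ∈ range (n + 1), n.choose k ^ 2 * (k.choose i * (n - k).choose i) =
      n.choose (2 * i) * ((2 * i).choose i * (2 * (n - i)).choose (n - i)) := by
  rcases lt_or_ge n (2 * i) with h | h
  · rw [Nat.choose_eq_zero_of_lt h, Finset.sum_eq_zero]
    · simp
    · intro k _
      rcases lt_or_ge k i with h' | h'
      · simp [Nat.choose_eq_zero_of_lt h']
      · simp [Nat.choose_eq_zero_of_lt (show n - k < i by omega)]
  · rw [show n + 1 = i + (n + 1 - i) by omega, Finset.sum_range_add, Finset.sum_eq_zero, zero_add]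
    · have e : ∀ t, n.choose (i + t) ^ 2 * ((i + t).choose i * (n - (i + t)).choose i)
          = n.choose (2 * i) * (2 * i).choose i * ((n - 2 * i).choose t * n.choose (t + i)) := by
        intro t
        have h1 := Nat.choose_mul (n := n) (k := i + t) (s := i) (by omega)
        have h2 := choose_swap (n - i) t i
        have h3 := Nat.choose_mul (n := n) (k := 2 * i) (s := i) (by omega)
        rw [show i + t - i = t by omega] at h1
        rw [show 2 * i - i = i by omega] at h3
        rw [Nat.sub_sub, show n - i - i = n - 2 * i by omega] at h2
        rw [add_comm t i, h3]
        calc _ = n.choose (i + t) * (n.choose (i + t) * (i + t).choose i)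
              * (n - (i + t)).choose i := by ring
          _ = n.choose (i + t) * n.choose i * ((n - i).choose t * (n - (i + t)).choose i) := by
              rw [h1]; ring
          _ = _ := by rw [h2]; ring
      simp only [e]
      rw [← Finset.mul_sum, vand _ _ _ _ (by omega), show n - 2 * i + n = 2 * (n - i) by omega,
        show n - 2 * i + i = n - i by omega]
      ring
    · intro l hl
      simp [Nat.choose_eq_zero_of_lt (Finset.mem_range.1 hl)]

open Finset in
/-- one multiplication by `n.choose k` on coefficient vectors -/
def stepT (n : ℕ) (c : ℕ → ℕ) (l : ℕ) : ℕ :=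
  ∑ i ∈ range (n + 1), n.choose i * l.choose i * c i

open Finset in
lemma stepT_spec (n : ℕ) (c : ℕ → ℕ) (k : ℕ) (hk : k ≤ n) :
    n.choose k * ∑ i ∈ range (n + 1), c i * (k.choose i * (n - k).choose i) =
      ∑ i ∈ range (n + 1), stepT n c i * (k.choose i * (n - k).choose i) := by
  simp only [stepT, Finset.sum_mul, Finset.mul_sum]
  rw [Finset.sum_comm]
  refine Finset.sum_congr rfl fun i hi => ?_
  have := mulP n k i hk (by simp at hi; omega)
  calc _ = c i * (n.choose k * (k.choose i * (n - k).choose i)) := by ring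
    _ = _ := by
      rw [this, Finset.mul_sum]
      refine Finset.sum_congr rfl fun l _ => ?_
      ring

/-- the parity invariant -/
def good (n : ℕ) (c : ℕ → ℕ) : Prop := c 0 % 2 = 1 ∧ ∀ i, 0 < i → 2 ∣ n.choose i * c i

open Finset in
lemma stepT_good (n : ℕ) (c : ℕ → ℕ) (hc : good n c) (l : ℕ) : stepT n c l ≡ 1 [MOD 2] := by
  unfold stepT
  rw [Finset.sum_range_succ']
  have : 2 ∣ ∑ k ∈ range n, n.choose (k + 1) * l.choose (k + 1) * c (k + 1) := by
    refine Finset.dvd_sum fun i _ => ?_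
    rw [mul_right_comm]
    exact Dvd.dvd.mul_right (hc.2 (i + 1) (by omega)) _
  have h0 := hc.1
  unfold Nat.ModEq
  simp
  omega

open Finset in
lemma stepT2_good (n : ℕ) (c : ℕ → ℕ) (hc : good n c) : good n (stepT n (stepT n c)) := by
  have key : ∀ l, stepT n (stepT n c) l ≡ (n + l).choose n [MOD 2] := by
    intro l
    have := vand l n (n + 1) 0 (by omega)
    simp only [add_zero] at this
    rw [← this, stepT]
    refine Nat.ModEq.sum fun i _ => ?_
    have := (stepT_good n c hc i).mul_left (n.choose i * l.choose i)
    simpa using this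
  refine ⟨?_, fun l hl => ?_⟩
  · have := key 0
    simpa [Nat.ModEq] using this
  · have h1 := (key l).mul_left (n.choose l)
    rw [(h1.dvd_iff (dvd_refl 2))]
    have h2 := Nat.choose_mul (n := n + l) (k := 2 * l) (s := l) (by omega)
    rw [show n + l - l = n by omega, show 2 * l - l = l by omega] at h2
    rw [mul_comm, Nat.choose_symm_add, ← h2]
    exact Dvd.dvd.mul_left (Nat.two_dvd_centralBinom_of_one_le hl) _

open Finset in
lemma exists_coeff (n r : ℕ) : ∃ c, good n c ∧ ∀ k ≤ n, n.choose k ^ (2 * r) =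
    ∑ i ∈ range (n + 1), c i * (k.choose i * (n - k).choose i) := by
  induction r with
  | zero =>
    refine ⟨fun i => if i = 0 then 1 else 0, ⟨by simp, fun i hi => by simp [hi.ne']⟩, fun k _ => ?_⟩
    simp
  | succ r ih =>
    obtain ⟨c, hc, h⟩ := ih
    refine ⟨_, stepT2_good n c hc, fun k hk => ?_⟩
    rw [← stepT_spec n _ k hk, ← stepT_spec n _ k hk, ← h k hk]
    ring

lemma val_choose (n i : ℕ) (h : i ≤ n) :
    padicValNat 2 (n.choose i) + s2 n = s2 i + s2 (n - i) := by
  have hle : s2 n ≤ s2 i + s2 (n - i) := by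
    have h1 := sub_one_mul_padicValNat_factorial (p := 2) n
    have h2 := sub_one_mul_padicValNat_factorial (p := 2) i
    have h3 := sub_one_mul_padicValNat_factorial (p := 2) (n - i)
    have h4 := Nat.digit_sum_le 2 n
    have h5 := Nat.digit_sum_le 2 i
    have h6 := Nat.digit_sum_le 2 (n - i)
    have h7 := congrArg (padicValNat 2) (Nat.choose_mul_factorial_mul_factorial h)
    rw [padicValNat.mul (mul_ne_zero (Nat.choose_pos h).ne' (Nat.factorial_ne_zero _))
      (Nat.factorial_ne_zero _), padicValNat.mul (Nat.choose_pos h).ne'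
      (Nat.factorial_ne_zero _)] at h7
    unfold s2
    omega
  have := sub_one_mul_padicValNat_choose_eq_sub_sum_digits (p := 2) h
  unfold s2 at *
  omega

lemma s2_two_mul (n : ℕ) : s2 (2 * n) = s2 n := by
  rcases Nat.eq_zero_or_pos n with rfl | h
  · simp
  · unfold s2
    rw [Nat.digits_def' (by norm_num) (by omega)]
    simp

lemma val_central (n : ℕ) : padicValNat 2 ((2 * n).choose n) = s2 n := by
  have := val_choose (2 * n) n (by omega)
  rw [s2_two_mul, show 2 * n - n = n by omega] at this
  omega

lemma dvdW (n i : ℕ) (h : i ≤ n) :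
    2 ^ (s2 n + padicValNat 2 (n.choose i)) ∣
      n.choose (2 * i) * ((2 * i).choose i * (2 * (n - i)).choose (n - i)) := by
  refine Dvd.dvd.mul_left ?_ _
  have h1 : (2 * i).choose i ≠ 0 := (Nat.choose_pos (by omega)).ne'
  have h2 : (2 * (n - i)).choose (n - i) ≠ 0 := (Nat.choose_pos (by omega)).ne'
  rw [padicValNat_dvd_iff_le (mul_ne_zero h1 h2), padicValNat.mul h1 h2, val_central, val_central,
    ← val_choose n i h, add_comm]

lemma dvd_term (n i c : ℕ) (h : i ≤ n) (hc : 2 ∣ n.choose i * c) :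
    2 ^ (s2 n + 1) ∣ c * (n.choose (2 * i) * ((2 * i).choose i * (2 * (n - i)).choose (n - i))) := by
  rcases (Nat.Prime.dvd_mul Nat.prime_two).1 hc with h' | h'
  · refine Dvd.dvd.mul_left (dvd_trans (pow_dvd_pow 2 ?_) (dvdW n i h)) _
    have := one_le_padicValNat_of_dvd (p := 2) (Nat.choose_pos h).ne' h'
    omega
  · rw [pow_succ, mul_comm (2 ^ _)]
    exact mul_dvd_mul h' (dvd_trans (pow_dvd_pow 2 (by omega)) (dvdW n i h))

theorem stmt_10 (e n : ℕ) (he : Even e) (he2 : 2 ≤ e) (hn : 0 < n) :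
    padicValNat 2 (∑ k ∈ Finset.range (n + 1), (n.choose k) ^ e) = s2 n := by
  obtain ⟨r, rfl⟩ : ∃ r, e = 2 + 2 * r := by
    obtain ⟨q, rfl⟩ := he
    exact ⟨q - 1, by omega⟩
  obtain ⟨c, hc, h⟩ := exists_coeff n r
  have key : ∑ k ∈ Finset.range (n + 1), (n.choose k) ^ (2 + 2 * r) =
      ∑ i ∈ Finset.range (n + 1),
        c i * (n.choose (2 * i) * ((2 * i).choose i * (2 * (n - i)).choose (n - i))) := by
    calc _ = ∑ k ∈ Finset.range (n + 1), ∑ i ∈ Finset.range (n + 1),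
          c i * (n.choose k ^ 2 * (k.choose i * (n - k).choose i)) := by
          refine Finset.sum_congr rfl fun k hk => ?_
          rw [pow_add, h k (by simp at hk; omega), Finset.mul_sum]
          refine Finset.sum_congr rfl fun i _ => ?_
          ring
      _ = _ := by
          rw [Finset.sum_comm]
          refine Finset.sum_congr rfl fun i hi => ?_
          rw [← Finset.mul_sum, sumW n i (by simp at hi; omega)]
  rw [key, Finset.sum_range_succ']
  obtain ⟨A, hA⟩ : 2 ^ (s2 n + 1) ∣ ∑ k ∈ Finset.range n, c (k + 1) *
      (n.choose (2 * (k + 1)) * ((2 * (k + 1)).choose (k + 1) *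
        (2 * (n - (k + 1))).choose (n - (k + 1)))) := by
    refine Finset.dvd_sum fun i hi => ?_
    exact dvd_term n (i + 1) _ (by simp at hi; omega) (hc.2 _ (by omega))
  have hB0 : (2 * n).choose n ≠ 0 := (Nat.choose_pos (by omega)).ne'
  obtain ⟨B, hB⟩ : 2 ^ s2 n ∣ (2 * n).choose n := by
    rw [padicValNat_dvd_iff_le hB0, val_central]
  have hBodd : ¬ 2 ∣ B := by
    rintro ⟨D, rfl⟩
    have : 2 ^ (s2 n + 1) ∣ (2 * n).choose n := ⟨D, by rw [hB]; ring⟩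
    rw [padicValNat_dvd_iff_le hB0, val_central] at this
    omega
  rw [hA]
  simp only [mul_zero, Nat.choose_zero_right, one_mul, Nat.sub_zero, hB]
  rw [show 2 ^ (s2 n + 1) * A + c 0 * (2 ^ s2 n * B) = 2 ^ s2 n * (2 * A + c 0 * B) by ring]
  have hodd : ¬ 2 ∣ 2 * A + c 0 * B := by
    intro h'
    have h2 : 2 ∣ c 0 * B := (Nat.dvd_add_right (Dvd.intro _ rfl)).1 h'
    rcases (Nat.Prime.dvd_mul Nat.prime_two).1 h2 with h3 | h3
    · have := hc.1
      omega
    · exact hBodd h3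
  have hne : 2 * A + c 0 * B ≠ 0 := fun h0 => hodd (by rw [h0]; exact dvd_zero 2)
  rw [padicValNat.mul (by positivity) hne, padicValNat.prime_pow,
    padicValNat.eq_zero_of_not_dvd hodd, add_zero]
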